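/- Failure of the converse part without strong converse properties (Example 6.1). Let 𝒱 = 𝒳 = 𝒴 = {0,1}. Define the general source V = {Vⁿ} by: P_{Vⁿ} is the uniform distribution on {0,1}ⁿ when n is even, and P_{Vⁿ}(0ⁿ) = 1 when n is odd. Define the general channel W = {Wⁿ} by: Wⁿ(y|x) = 1{y = x} when n is even, and Wⁿ(0ⁿ|x) = 1 for all x when n is odd. Then: (a) V is transmissible over W with zero error probability, i.e. there exist codes (φₙ, ψₙ) with εₙ = 0 for all n; (b) H̄(V) = log 2; and (c) sup_X I_(X;Y) = 0, where the supremum is over all channel inputs X = {Xⁿ}. In particular H̄(V) > sup_X I_(X;Y) although V is transmissible over W. -/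

import Mathlib

open Filter Real Topology

namespace ISC

/-- Words of length `n` over alphabet `A`. -/
abbrev Word (A : Type*) (n : ℕ) : Type _ := Fin n → A

/-- `p` is a probability mass function. -/
def IsPMF {α : Type*} (p : α → ℝ) : Prop :=
  (∀ a, 0 ≤ p a) ∧ HasSum p 1

/-- Probability of the event `S` under the pmf `p`. -/
noncomputable def prob {α : Type*} (p : α → ℝ) (S : Set α) : ℝ :=
  ∑' a, S.indicator p a

/-- Output marginal `P_{Yⁿ}` of the channel `W` fed with the joint input law `P_{VⁿXⁿ}`. -/
noncomputable def outDist {𝒱 𝒳 𝒴 : Type*} {n : ℕ}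
    (PVX : Word 𝒱 n × Word 𝒳 n → ℝ) (W : Word 𝒳 n → Word 𝒴 n → ℝ)
    (y : Word 𝒴 n) : ℝ :=
  ∑' vx : Word 𝒱 n × Word 𝒳 n, PVX vx * W vx.2 y

/-- Joint law of `(Vⁿ, Xⁿ, Yⁿ)`: `P_{VⁿXⁿ}(v,x) · Wⁿ(y|x)`. -/
noncomputable def jointLaw {𝒱 𝒳 𝒴 : Type*} {n : ℕ}
    (PVX : Word 𝒱 n × Word 𝒳 n → ℝ) (W : Word 𝒳 n → Word 𝒴 n → ℝ) :
    Word 𝒱 n × Word 𝒳 n × Word 𝒴 n → ℝ :=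
  fun z => PVX (z.1, z.2.1) * W z.2.1 z.2.2

/-- The joint input law `P_{VⁿXⁿ}` induced by the deterministic encoder `φ`:
`P_{Vⁿ}(v) 1{x = φ(v)}`. -/
noncomputable def codeInput {𝒱 𝒳 : Type*} [DecidableEq 𝒳] {n : ℕ} (PV : Word 𝒱 n → ℝ)
    (φ : Word 𝒱 n → Word 𝒳 n) : Word 𝒱 n × Word 𝒳 n → ℝ :=
  fun vx => if vx.2 = φ vx.1 then PV vx.1 else 0

/-- Error probability `εₙ` of the joint source-channel code `(φ, ψ)`. -/
noncomputable def errProb {𝒱 𝒳 𝒴 : Type*} {n : ℕ}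
    (PV : Word 𝒱 n → ℝ) (W : Word 𝒳 n → Word 𝒴 n → ℝ)
    (φ : Word 𝒱 n → Word 𝒳 n) (ψ : Word 𝒴 n → Word 𝒱 n) : ℝ :=
  ∑' v, PV v * prob (W (φ v)) {y | ψ y ≠ v}

/-- `V` is transmissible over `W`. -/
def Transmissible {𝒱 𝒳 𝒴 : Type*} (PV : (n : ℕ) → Word 𝒱 n → ℝ)
    (W : (n : ℕ) → Word 𝒳 n → Word 𝒴 n → ℝ) : Prop :=
  ∃ (φ : (n : ℕ) → Word 𝒱 n → Word 𝒳 n) (ψ : (n : ℕ) → Word 𝒴 n → Word 𝒱 n),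
    Tendsto (fun n => errProb (PV n) (W n) (φ n) (ψ n)) atTop (nhds 0)

/-- Output marginal of the channel `W` for an input distribution `P_{Xⁿ}`. -/
noncomputable def outDistX {𝒳 𝒴 : Type*} {n : ℕ}
    (PX : Word 𝒳 n → ℝ) (W : Word 𝒳 n → Word 𝒴 n → ℝ) (y : Word 𝒴 n) : ℝ :=
  ∑' x : Word 𝒳 n, PX x * W x y

/-- Joint law of `(Xⁿ, Yⁿ)`: `P_{Xⁿ}(x) · Wⁿ(y|x)`. -/
noncomputable def jointXY {𝒳 𝒴 : Type*} {n : ℕ}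
    (PX : Word 𝒳 n → ℝ) (W : Word 𝒳 n → Word 𝒴 n → ℝ) :
    Word 𝒳 n × Word 𝒴 n → ℝ :=
  fun z => PX z.1 * W z.1 z.2

/-- Limit superior in probability of a sequence of random variables `Z i`
distributed according to the pmfs `p i`. -/
noncomputable def plimsup {α : ℕ → Type*} (p : (i : ℕ) → α i → ℝ)
    (Z : (i : ℕ) → α i → ℝ) : EReal :=
  sInf {β : EReal |
    Tendsto (fun i => prob (p i) {a | β < (Z i a : EReal)}) atTop (nhds 0)}

/-- Limit inferior in probability of a sequence of random variables `Z i`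
distributed according to the pmfs `p i`. -/
noncomputable def pliminf {α : ℕ → Type*} (p : (i : ℕ) → α i → ℝ)
    (Z : (i : ℕ) → α i → ℝ) : EReal :=
  sSup {β : EReal |
    Tendsto (fun i => prob (p i) {a | (Z i a : EReal) < β}) atTop (nhds 0)}

/-- Spectral sup-entropy rate `H̄(V)`. -/
noncomputable def Hbar {𝒱 : Type*} (PV : (n : ℕ) → Word 𝒱 n → ℝ) : EReal :=
  plimsup (fun n => PV n) (fun n v => (1 / (n : ℝ)) * Real.log (1 / PV n v))

/-- Spectral inf-entropy rate `H_(V)`. -/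
noncomputable def Hlow {𝒱 : Type*} (PV : (n : ℕ) → Word 𝒱 n → ℝ) : EReal :=
  pliminf (fun n => PV n) (fun n v => (1 / (n : ℝ)) * Real.log (1 / PV n v))

/-- Spectral inf-information rate `I_(X;Y)` of the channel `W` with input `X`. -/
noncomputable def Ilow {𝒳 𝒴 : Type*} (PX : (n : ℕ) → Word 𝒳 n → ℝ)
    (W : (n : ℕ) → Word 𝒳 n → Word 𝒴 n → ℝ) : EReal :=
  pliminf (fun n => jointXY (PX n) (W n))
    (fun n z => (1 / (n : ℝ)) * Real.log (W n z.1 z.2 / outDistX (PX n) (W n) z.2))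

/-- Spectral sup-information rate `Ī(X;Y)` of the channel `W` with input `X`. -/
noncomputable def Ihigh {𝒳 𝒴 : Type*} (PX : (n : ℕ) → Word 𝒳 n → ℝ)
    (W : (n : ℕ) → Word 𝒳 n → Word 𝒴 n → ℝ) : EReal :=
  plimsup (fun n => jointXY (PX n) (W n))
    (fun n z => (1 / (n : ℝ)) * Real.log (W n z.1 z.2 / outDistX (PX n) (W n) z.2))

/-- `sup_X I_(X;Y)`: the supremum over all channel inputs. -/
noncomputable def supIlow {𝒳 𝒴 : Type*}
    (W : (n : ℕ) → Word 𝒳 n → Word 𝒴 n → ℝ) : EReal :=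
  ⨆ PX : {PX : (n : ℕ) → Word 𝒳 n → ℝ // ∀ n, IsPMF (PX n)}, Ilow PX.1 W


/-- The source of Example 6.1: uniform on `{0,1}ⁿ` for even `n`,
point mass on the all-zeros word for odd `n`. -/
noncomputable def exPV (n : ℕ) : Word Bool n → ℝ :=
  if Even n then fun _ => (1 / 2 : ℝ) ^ n
  else fun v => if v = (fun _ => false) then 1 else 0

/-- The channel of Example 6.1: identity for even `n`,
constant all-zeros output for odd `n`. -/
noncomputable def exW (n : ℕ) : Word Bool n → Word Bool n → ℝ :=
  if Even n then fun x y => if y = x then 1 else 0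
  else fun _ y => if y = (fun _ => false) then 1 else 0

/-! The two rates are decided by different blocklengths. The rate `H̄(V)` is decided by the
even blocklengths: there the source is uniform, so `H̄(V)` is the largest rate `log |𝒱|` a
source over a finite alphabet can have. The rate `I_(X;Y)` is decided by the odd ones: there the
output is independent of the input, so the information density vanishes. Transmission succeeds at
every blocklength, since the channel is noiseless when the source is uniform and useless only when
the source is constant. -/

section Prob

variable {α : Type*} {p : α → ℝ} {S : Set α}

lemma prob_eq_zero_of_disjoint_support (h : Disjoint p.support S) : prob p S = 0 := by
  simp [prob, Set.indicator_eq_zero'.2 h]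

lemma prob_eq_one_of_support_subset (hp : IsPMF p) (h : p.support ⊆ S) : prob p S = 1 := by
  rw [prob, Set.indicator_eq_self.2 h, hp.2.tsum_eq]

lemma prob_nonneg (hp : ∀ a, 0 ≤ p a) : 0 ≤ prob p S :=
  tsum_nonneg fun _ => Set.indicator_nonneg (fun a _ => hp a) _

lemma prob_le_card_mul [Fintype α] {c : ℝ} (hc : 0 ≤ c) (h : ∀ a ∈ S, p a ≤ c) :
    prob p S ≤ Fintype.card α * c := by
  rw [prob, tsum_fintype, ← nsmul_eq_mul]
  exact Finset.sum_le_card_nsmul _ _ _ fun a _ => Set.indicator_le' h (fun _ _ => hc) a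

lemma isPMF_ite_eq [DecidableEq α] (a : α) : IsPMF fun b => if b = a then (1 : ℝ) else 0 :=
  ⟨fun _ => ite_nonneg zero_le_one le_rfl, hasSum_ite_eq a 1⟩

lemma isPMF_uniform [Fintype α] [Nonempty α] : IsPMF fun _ : α => (Fintype.card α : ℝ)⁻¹ :=
  ⟨fun _ => by positivity, by
    simpa using hasSum_fintype fun _ : α => (Fintype.card α : ℝ)⁻¹⟩

end Prob

section LimitsInProbability

variable {α : ℕ → Type*} {p Z : (i : ℕ) → α i → ℝ} {β : EReal}

lemma not_tendsto_prob_zero_of_frequently_support_subset (hp : ∀ i, IsPMF (p i))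
    {S : (i : ℕ) → Set (α i)} (h : ∃ᶠ i in atTop, (p i).support ⊆ S i) :
    ¬ Tendsto (fun i => prob (p i) (S i)) atTop (𝓝 0) := fun hlim =>
  let ⟨i, hsupp, hlt⟩ := (h.and_eventually (hlim.eventually_lt_const zero_lt_one)).exists
  hlt.ne (prob_eq_one_of_support_subset (hp i) hsupp)

lemma le_plimsup_of_frequently_le (hp : ∀ i, IsPMF (p i))
    (h : ∃ᶠ i in atTop, ∀ a ∈ (p i).support, β ≤ Z i a) : β ≤ plimsup p Z := by
  refine le_sInf fun b hb => ?_
  by_contra! hlt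
  exact not_tendsto_prob_zero_of_frequently_support_subset hp
    (h.mono fun i hi a ha => hlt.trans_le (hi a ha)) hb

lemma pliminf_le_of_frequently_le (hp : ∀ i, IsPMF (p i))
    (h : ∃ᶠ i in atTop, ∀ a ∈ (p i).support, (Z i a : EReal) ≤ β) : pliminf p Z ≤ β := by
  refine sSup_le fun b hb => ?_
  by_contra! hlt
  exact not_tendsto_prob_zero_of_frequently_support_subset hp
    (h.mono fun i hi a ha => (hi a ha).trans_lt hlt) hb

lemma le_pliminf_of_eventually_le (h : ∀ᶠ i in atTop, ∀ a ∈ (p i).support, β ≤ Z i a) :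
    β ≤ pliminf p Z := by
  refine le_sSup (tendsto_const_nhds.congr' (h.mono fun i hi => ?_))
  exact (prob_eq_zero_of_disjoint_support
    (Set.disjoint_left.2 fun a ha => (hi a ha).not_gt)).symm

end LimitsInProbability

section SourceEntropy

variable {𝒱 : Type*} [Fintype 𝒱] {PV : (n : ℕ) → Word 𝒱 n → ℝ}

lemma le_exp_neg_pow_of_lt_mul_log_one_div {n : ℕ} {β q : ℝ} (hn : n ≠ 0) (hq : 0 ≤ q)
    (h : β < 1 / n * log (1 / q)) : q ≤ exp (-β) ^ n := by
  rcases hq.eq_or_lt with rfl | hq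
  · positivity
  have hn' : (0 : ℝ) < n := by positivity
  have hlog : β * n < -log q := by
    rwa [one_div_mul_eq_div, lt_div_iff₀ hn', one_div, log_inv] at h
  rw [← exp_nat_mul, ← log_le_iff_le_exp hq]
  linarith

lemma prob_log_one_div_gt_le {n : ℕ} (hn : n ≠ 0) {P : Word 𝒱 n → ℝ} (hP : ∀ v, 0 ≤ P v)
    (β : ℝ) :
    prob P {v | (β : EReal) < (1 / n * log (1 / P v) : ℝ)} ≤
      (Fintype.card 𝒱 * exp (-β)) ^ n := by
  calc prob P {v | (β : EReal) < (1 / n * log (1 / P v) : ℝ)}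
      ≤ Fintype.card (Word 𝒱 n) * exp (-β) ^ n :=
        prob_le_card_mul (by positivity) fun v hv =>
          le_exp_neg_pow_of_lt_mul_log_one_div hn (hP v) (EReal.coe_lt_coe_iff.1 hv)
    _ = (Fintype.card 𝒱 * exp (-β)) ^ n := by simp [mul_pow]

theorem Hbar_le_log_card (hPV : ∀ n v, 0 ≤ PV n v) :
    Hbar PV ≤ (log (Fintype.card 𝒱) : ℝ) := by
  refine EReal.le_of_forall_lt_iff_le.1 fun β hβ => sInf_le ?_
  have hcard : Fintype.card 𝒱 * exp (-β) < 1 := by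
    rw [exp_neg, ← div_eq_mul_inv, div_lt_one (exp_pos β)]
    exact lt_exp_of_log_lt (EReal.coe_lt_coe_iff.1 hβ)
  refine squeeze_zero' (.of_forall fun n => prob_nonneg (hPV n)) ?_
    (tendsto_pow_atTop_nhds_zero_of_lt_one (by positivity) hcard)
  filter_upwards [eventually_ne_atTop 0] with n hn
  exact prob_log_one_div_gt_le hn (hPV n) β

theorem Hbar_eq_log_card_of_frequently_uniform (hPV : ∀ n, IsPMF (PV n))
    (hunif : ∃ᶠ n in atTop, ∀ v, PV n v = ((Fintype.card 𝒱 : ℝ) ^ n)⁻¹) :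
    Hbar PV = (log (Fintype.card 𝒱) : ℝ) := by
  refine (Hbar_le_log_card fun n => (hPV n).1).antisymm (le_plimsup_of_frequently_le hPV ?_)
  refine (hunif.and_eventually (eventually_ne_atTop 0)).mono fun n ⟨hn, hn0⟩ v _ => ?_
  rw [hn v, one_div (_⁻¹), inv_inv, log_pow, one_div, inv_mul_cancel_left₀ (by positivity)]

end SourceEntropy

section ChannelInformation

variable {𝒳 𝒴 : Type*}

lemma isPMF_jointXY {n : ℕ} {PX : Word 𝒳 n → ℝ} {W : Word 𝒳 n → Word 𝒴 n → ℝ}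
    (hPX : IsPMF PX) (hW : ∀ x, IsPMF (W x)) : IsPMF (jointXY PX W) := by
  have hnonneg : 0 ≤ jointXY PX W := fun z => mul_nonneg (hPX.1 _) ((hW _).1 _)
  have hfiber (x) : HasSum (fun y => jointXY PX W (x, y)) (PX x) := by
    simpa only [jointXY, mul_one] using (hW x).2.mul_left (PX x)
  have hsummable : Summable (jointXY PX W) :=
    (summable_prod_of_nonneg hnonneg).2
      ⟨fun x => (hfiber x).summable, by simpa only [(hfiber _).tsum_eq] using hPX.2.summable⟩
  exact ⟨hnonneg, (hsummable.hasSum.prod_fiberwise hfiber).unique hPX.2 ▸ hsummable.hasSum⟩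

lemma outDistX_eq_of_forall_eq {n : ℕ} {PX : Word 𝒳 n → ℝ} {W : Word 𝒳 n → Word 𝒴 n → ℝ}
    {Q : Word 𝒴 n → ℝ} (hPX : IsPMF PX) (hW : ∀ x, W x = Q) : outDistX PX W = Q := by
  ext y
  simp only [outDistX, hW, tsum_mul_right, hPX.2.tsum_eq, one_mul]

lemma outDistX_ite_eq [DecidableEq 𝒳] {n : ℕ} (x₀ : Word 𝒳 n)
    (W : Word 𝒳 n → Word 𝒴 n → ℝ) :
    outDistX (fun x => if x = x₀ then 1 else 0) W = W x₀ := by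
  ext y
  simp [outDistX]

lemma Ilow_nonpos_of_frequently_const {PX : (n : ℕ) → Word 𝒳 n → ℝ}
    {W : (n : ℕ) → Word 𝒳 n → Word 𝒴 n → ℝ} (hPX : ∀ n, IsPMF (PX n))
    (hW : ∀ n x, IsPMF (W n x)) (hconst : ∃ᶠ n in atTop, ∃ Q, ∀ x, W n x = Q) :
    Ilow PX W ≤ 0 := by
  refine pliminf_le_of_frequently_le (fun n => isPMF_jointXY (hPX n) (hW n)) ?_
  refine hconst.mono fun n ⟨Q, hQ⟩ z _ => ?_
  simp [outDistX_eq_of_forall_eq (hPX n) hQ, hQ]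

/-- A constant input `x₀` makes the output law `W(·|x₀)`, so the information density vanishes. -/
lemma supIlow_nonneg [Nonempty 𝒳] (W : (n : ℕ) → Word 𝒳 n → Word 𝒴 n → ℝ) :
    0 ≤ supIlow W := by
  classical
  obtain ⟨x₀⟩ := ‹Nonempty 𝒳›
  let PX (n : ℕ) (x : Word 𝒳 n) : ℝ := if x = fun _ => x₀ then 1 else 0
  refine le_iSup_of_le ⟨PX, fun n => isPMF_ite_eq _⟩ (le_pliminf_of_eventually_le ?_)
  refine .of_forall fun n ⟨x, y⟩ hxy => ?_
  obtain rfl : x = fun _ => x₀ := by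
    by_contra hx
    simp [jointXY, PX, hx] at hxy
  simp [PX, outDistX_ite_eq]

theorem supIlow_eq_zero_of_frequently_const [Nonempty 𝒳]
    {W : (n : ℕ) → Word 𝒳 n → Word 𝒴 n → ℝ} (hW : ∀ n x, IsPMF (W n x))
    (hconst : ∃ᶠ n in atTop, ∃ Q, ∀ x, W n x = Q) : supIlow W = 0 :=
  (iSup_le fun PX => Ilow_nonpos_of_frequently_const PX.2 hW hconst).antisymm (supIlow_nonneg W)

end ChannelInformation

lemma errProb_eq_zero {𝒱 𝒳 𝒴 : Type*} {n : ℕ} {PV : Word 𝒱 n → ℝ}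
    {W : Word 𝒳 n → Word 𝒴 n → ℝ} {φ : Word 𝒱 n → Word 𝒳 n} {ψ : Word 𝒴 n → Word 𝒱 n}
    (h : ∀ v ∈ PV.support, ∀ y ∈ (W (φ v)).support, ψ y = v) : errProb PV W φ ψ = 0 := by
  have hterm (v) : PV v * prob (W (φ v)) {y | ψ y ≠ v} = 0 := by
    by_cases hv : PV v = 0
    · rw [hv, zero_mul]
    · have hcorrect : Disjoint (W (φ v)).support {y | ψ y ≠ v} :=
        Set.disjoint_left.2 fun y hy hne => hne (h v hv y hy)
      rw [prob_eq_zero_of_disjoint_support hcorrect, mul_zero]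
  simp only [errProb, hterm, tsum_zero]

section Example

lemma exPV_of_even {n : ℕ} (hn : Even n) (v : Word Bool n) :
    exPV n v = ((Fintype.card Bool : ℝ) ^ n)⁻¹ := by
  simp [exPV, hn]

lemma exW_of_odd {n : ℕ} (hn : Odd n) (x : Word Bool n) :
    exW n x = fun y => if y = fun _ => false then 1 else 0 := by
  simp [exW, Nat.not_even_iff_odd.2 hn]

lemma isPMF_exPV (n : ℕ) : IsPMF (exPV n) := by
  unfold exPV
  split_ifs
  · simpa using isPMF_uniform (α := Word Bool n)
  · exact isPMF_ite_eq _

lemma isPMF_exW (n : ℕ) (x : Word Bool n) : IsPMF (exW n x) := by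
  unfold exW
  split_ifs <;> exact isPMF_ite_eq _

lemma errProb_exPV_exW_id (n : ℕ) : errProb (exPV n) (exW n) id id = 0 := by
  refine errProb_eq_zero fun v hv y hy => ?_
  by_cases hn : Even n
  · simpa [exW, hn] using hy
  · have hv0 : v = fun _ => false := by simpa [exPV, hn] using hv
    have hy0 : y = fun _ => false := by simpa [exW, hn] using hy
    exact hy0.trans hv0.symm

lemma Hbar_exPV : Hbar exPV = (log 2 : ℝ) := by
  simpa using Hbar_eq_log_card_of_frequently_uniform isPMF_exPV
    (Nat.frequently_even.mono fun _ => exPV_of_even)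

lemma supIlow_exW : supIlow exW = 0 :=
  supIlow_eq_zero_of_frequently_const isPMF_exW
    (Nat.frequently_odd.mono fun _ hn => ⟨_, exW_of_odd hn⟩)

end Example

/-- **Failure of the converse part without strong converse properties** (Example 6.1). -/
theorem failure_of_converse_without_strong_converse :
    (∃ (φ : (n : ℕ) → Word Bool n → Word Bool n)
        (ψ : (n : ℕ) → Word Bool n → Word Bool n),
      ∀ n, errProb (exPV n) (exW n) (φ n) (ψ n) = 0) ∧
    Hbar exPV = (Real.log 2 : EReal) ∧
    supIlow exW = (0 : EReal) ∧
    supIlow exW < Hbar exPV := by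
  refine ⟨⟨fun _ => id, fun _ => id, errProb_exPV_exW_id⟩, Hbar_exPV, supIlow_exW, ?_⟩
  rw [supIlow_exW, Hbar_exPV]
  exact EReal.coe_pos.2 (log_pos one_lt_two)

end ISC
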